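/- Let S be a finite set of natural numbers and let m = ∑_{j ∈ S} 2^j. Then the multinomial coefficient m! / ∏_{j ∈ S} (2^j)! is odd. -/

import Mathlib

/-!
Adding one base-`p` digit at a time, from the lowest to the highest, writes the multinomial
coefficient as a product of binomial coefficients `(c * p ^ a + t).choose (c * p ^ a)` with
`t < p ^ a`. There is no carry in the sum `c * p ^ a + t`, so by Lucas's theorem each factor is
congruent to `c.choose c * t.choose 0 = 1` modulo `p`.
-/

section Prime

variable {p : ℕ} [Fact p.Prime]

theorem choose_modEq_choose_mod_pow_mul_choose_div_pow (n k a : ℕ) :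
    n.choose k ≡
      (n % p ^ a).choose (k % p ^ a) * (n / p ^ a).choose (k / p ^ a) [MOD p] := by
  induction a generalizing n k with
  | zero => simp [Nat.mod_one, Nat.ModEq.refl]
  | succ a ih =>
    have lucas_mod_pow :
        (n % p ^ (a + 1)).choose (k % p ^ (a + 1)) ≡
          (n % p).choose (k % p) * (n / p % p ^ a).choose (k / p % p ^ a) [MOD p] := by
      simpa only [pow_succ', Nat.mod_mul_right_mod, Nat.mod_mul_right_div_self] using
        Choose.choose_modEq_choose_mod_mul_choose_div_nat (p := p)
          (n := n % p ^ (a + 1)) (k := k % p ^ (a + 1))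
    calc
      n.choose k ≡ (n % p).choose (k % p) * (n / p).choose (k / p) [MOD p] :=
        Choose.choose_modEq_choose_mod_mul_choose_div_nat
      _ ≡ (n % p).choose (k % p) * ((n / p % p ^ a).choose (k / p % p ^ a) *
            (n / p / p ^ a).choose (k / p / p ^ a)) [MOD p] := (ih _ _).mul_left _
      _ = (n % p).choose (k % p) * (n / p % p ^ a).choose (k / p % p ^ a) *
            (n / p ^ (a + 1)).choose (k / p ^ (a + 1)) := by
        rw [Nat.div_div_eq_div_mul, Nat.div_div_eq_div_mul, ← pow_succ', mul_assoc]
      _ ≡ (n % p ^ (a + 1)).choose (k % p ^ (a + 1)) *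
            (n / p ^ (a + 1)).choose (k / p ^ (a + 1)) [MOD p] := lucas_mod_pow.symm.mul_right _

theorem choose_mul_pow_add_modEq_one (c : ℕ) {a t : ℕ} (ht : t < p ^ a) :
    (c * p ^ a + t).choose (c * p ^ a) ≡ 1 [MOD p] := by
  have hpos : 0 < p ^ a := Nat.zero_lt_of_lt ht
  simpa [Nat.mul_add_mod', Nat.mod_eq_of_lt ht, Nat.div_eq_of_lt ht, Nat.mul_div_cancel _ hpos,
    Nat.add_div_of_dvd_right (Dvd.intro_left c rfl)] using
    choose_modEq_choose_mod_pow_mul_choose_div_pow (p := p) (c * p ^ a + t) (c * p ^ a) a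

end Prime

theorem sum_digit_mul_pow_lt_pow {b a : ℕ} (hb : 0 < b) {S : Finset ℕ} {c : ℕ → ℕ}
    (hc : ∀ j ∈ S, c j < b) (hS : ∀ j ∈ S, j < a) : ∑ j ∈ S, c j * b ^ j < b ^ a := by
  induction S using Finset.induction_on_max generalizing a with
  | empty => simpa using pow_pos hb a
  | insert m s hm ih =>
    rw [Finset.forall_mem_insert] at hc hS
    rw [Finset.sum_insert fun h => lt_irrefl m (hm m h)]
    calc
      c m * b ^ m + ∑ j ∈ s, c j * b ^ j < c m * b ^ m + b ^ m := by
        gcongr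
        exact ih hc.2 hm
      _ = (c m + 1) * b ^ m := by ring
      _ ≤ b * b ^ m := by
        gcongr
        exact hc.1
      _ = b ^ (m + 1) := (pow_succ' b m).symm
      _ ≤ b ^ a := Nat.pow_le_pow_right hb hS.1

theorem stmt_9_general {p : ℕ} [hp : Fact p.Prime] {S : Finset ℕ} {c : ℕ → ℕ}
    (hc : ∀ j ∈ S, c j < p) : Nat.multinomial S (fun j => c j * p ^ j) ≡ 1 [MOD p] := by
  induction S using Finset.induction_on_max with
  | empty => rw [Nat.multinomial_empty]
  | insert a s ha ih =>
    have hcs : ∀ j ∈ s, c j < p := fun j hj => hc j (Finset.mem_insert_of_mem hj)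
    rw [Nat.multinomial_insert fun h => lt_irrefl a (ha a h)]
    exact (choose_mul_pow_add_modEq_one (c a)
      (sum_digit_mul_pow_lt_pow hp.out.pos hcs ha)).mul (ih hcs)

/-- For a finite set `S` of natural numbers, the multinomial coefficient
`(∑_{j ∈ S} 2 ^ j)! / ∏_{j ∈ S} (2 ^ j)!` is odd. -/
theorem stmt_9 (S : Finset ℕ) : Odd (Nat.multinomial S fun j => 2 ^ j) := by
  simpa only [one_mul] using Nat.odd_iff.mpr
    (stmt_9_general (p := 2) (S := S) (c := fun _ => 1) fun _ _ => one_lt_two)
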